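/- Let G be the elementary abelian 2-group of order 16, i.e. G = (ZMod 2)⁴, and let L be the Latin square of order 16 given by its Cayley table, L(x,y) = x + y for x, y ∈ G. Then there exists a critical set of L of cardinality 121. -/

import Mathlib

/-- `L` is a Latin square on `Q`: every row and column is a bijection. -/
def IsLatinSquare {Q : Type*} (L : Q → Q → Q) : Prop :=
  (∀ i, Function.Bijective (L i)) ∧ (∀ j, Function.Bijective fun i => L i j)

/-- The set of triples `C` is contained in (the set of triples of) the
Latin square `L`. -/
def ContainedIn {Q : Type*} (C : Set (Q × Q × Q)) (L : Q → Q → Q) : Prop :=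
  ∀ t ∈ C, L t.1 t.2.1 = t.2.2

/-- `C` is a critical set of the Latin square `L`: `C` is contained in `L`,
`L` is the only Latin square containing `C`, and no proper subset of `C`
has this property. -/
def IsCriticalSet {Q : Type*} (C : Set (Q × Q × Q)) (L : Q → Q → Q) : Prop :=
  ContainedIn C L ∧
  (∀ L' : Q → Q → Q, IsLatinSquare L' → ContainedIn C L' → L' = L) ∧
  (∀ C' : Set (Q × Q × Q), C' ⊂ C →
    ∃ L' : Q → Q → Q, IsLatinSquare L' ∧ ContainedIn C' L' ∧ L' ≠ L)

/-!
A partial filling of a Latin square determines it if its empty cells can be filled one after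
another, each being forced by the cells already filled. It is minimal with this property if each of
its cells lies in an intercalate (a 2 × 2 subsquare) whose three other cells are empty, because
switching that intercalate changes no other filled cell. Both conditions are finite checks, and for
the addition table of `(ZMod 2)⁴` they hold for the 121 cells with entry `0` in `fillTable`.
-/

section LatinSquare

variable {Q : Type*} {L L' : Q → Q → Q} {K : Set (Q × Q)}

/-- The partial Latin square obtained from `L` by keeping only the cells in `K`, as a set of
triples (row, column, symbol). -/
def entriesOn (L : Q → Q → Q) (K : Set (Q × Q)) : Set (Q × Q × Q) :=
  (fun p => (p.1, p.2, L p.1 p.2)) '' K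

theorem ncard_entriesOn : (entriesOn L K).ncard = K.ncard :=
  Set.ncard_image_of_injective K fun p q h => by
    simp only [Prod.mk.injEq] at h
    exact Prod.ext h.1 h.2.1

theorem containedIn_entriesOn_iff :
    ContainedIn (entriesOn L K) L' ↔ ∀ p ∈ K, L' p.1 p.2 = L p.1 p.2 :=
  Set.forall_mem_image

theorem isCriticalSet_iff_forall_diff_singleton {C : Set (Q × Q × Q)} :
    IsCriticalSet C L ↔ ContainedIn C L ∧
      (∀ L', IsLatinSquare L' → ContainedIn C L' → L' = L) ∧
      ∀ t ∈ C, ∃ L', IsLatinSquare L' ∧ ContainedIn (C \ {t}) L' ∧ L' ≠ L := by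
  refine and_congr_right' (and_congr_right' ⟨fun h t ht => h _ ?_, fun h C' hC' => ?_⟩)
  · exact Set.sdiff_singleton_ssubset.2 ht
  · obtain ⟨hsub, t, ht, htC'⟩ := Set.ssubset_iff_exists.1 hC'
    obtain ⟨L', hL', hCL', hne⟩ := h t ht
    exact ⟨L', hL', fun s hs => hCL' s ⟨hsub hs, fun e => htC' (e ▸ hs)⟩, hne⟩

/-- The filled cells `K` of `L` force the content of the cell `p = (x, y)`: either every other
symbol already occurs in row `x` or in column `y`, or the symbol `L x y` can occur in row `x` only
in column `y`, or it can occur in column `y` only in row `x`. -/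
def IsForced (L : Q → Q → Q) (K : Set (Q × Q)) (p : Q × Q) : Prop :=
  (∀ z ≠ L p.1 p.2, (∃ y, (p.1, y) ∈ K ∧ L p.1 y = z) ∨ ∃ x, (x, p.2) ∈ K ∧ L x p.2 = z) ∨
  (∀ y ≠ p.2, (p.1, y) ∈ K ∨ ∃ x, (x, y) ∈ K ∧ L x y = L p.1 p.2) ∨
  (∀ x ≠ p.1, (x, p.2) ∈ K ∨ ∃ y, (x, y) ∈ K ∧ L x y = L p.1 p.2)

theorem IsForced.apply_eq {p : Q × Q} (h : IsForced L K p) (hL : IsLatinSquare L)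
    (hL' : IsLatinSquare L') (hK : ∀ q ∈ K, L' q.1 q.2 = L q.1 q.2) :
    L' p.1 p.2 = L p.1 p.2 := by
  obtain ⟨x, y⟩ := p
  rcases h with hsymbol | hcolumn | hrow
  · by_contra hne
    rcases hsymbol _ hne with ⟨y', hy', e⟩ | ⟨x', hx', e⟩
    · obtain rfl : y' = y := (hL'.1 x).1 ((hK _ hy').trans e)
      exact hne (hK _ hy')
    · obtain rfl : x' = x := (hL'.2 y).1 ((hK _ hx').trans e)
      exact hne (hK _ hx')
  · obtain ⟨y', hy'⟩ := (hL'.1 x).2 (L x y)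
    obtain rfl | hne := eq_or_ne y' y
    · exact hy'
    rcases hcolumn y' hne with hmem | ⟨x', hmem, e⟩
    · exact absurd ((hL.1 x).1 ((hK _ hmem).symm.trans hy')) hne
    · obtain rfl : x' = x := (hL'.2 y').1 ((hK _ hmem).trans (e.trans hy'.symm))
      exact absurd ((hL.1 x').1 e) hne
  · obtain ⟨x', hx'⟩ := (hL'.2 y).2 (L x y)
    obtain rfl | hne := eq_or_ne x' x
    · exact hx'
    rcases hrow x' hne with hmem | ⟨y', hmem, e⟩
    · exact absurd ((hL.2 y).1 ((hK _ hmem).symm.trans hx')) hne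
    · obtain rfl : y' = y := (hL'.1 x').1 ((hK _ hmem).trans (e.trans hx'.symm))
      exact absurd ((hL.2 y').1 e) hne

theorem IsLatinSquare.eq_of_forall_isForced {α : Type*} [LT α] [WellFoundedLT α]
    (hL : IsLatinSquare L) (r : Q × Q → α) (hr : ∀ p ∉ K, IsForced L {q | r q < r p} p)
    (hL' : IsLatinSquare L') (hK : ∀ p ∈ K, L' p.1 p.2 = L p.1 p.2) : L' = L := by
  suffices agree : ∀ p : Q × Q, L' p.1 p.2 = L p.1 p.2 from funext₂ fun x y => agree (x, y)
  intro p
  induction h : r p using WellFoundedLT.induction generalizing p with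
  | ind a ih =>
    subst h
    by_cases hp : p ∈ K
    · exact hK p hp
    · exact (hr p hp).apply_eq hL hL' fun q hq => ih (r q) hq q rfl

open Classical in
/-- The array obtained from `L` by exchanging the contents of columns `y` and `y'` within rows `x`
and `x'`. This is the intercalate switch when these four cells form a `2 × 2` subsquare. -/
noncomputable def intercalateSwitch (L : Q → Q → Q) (x x' y y' a b : Q) : Q :=
  if a = x ∨ a = x' then L a (Equiv.swap y y' b) else L a b

theorem intercalateSwitch_of_not {x x' y y' a b : Q}
    (h : ¬((a = x ∨ a = x') ∧ (b = y ∨ b = y'))) :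
    intercalateSwitch L x x' y y' a b = L a b := by
  grind [intercalateSwitch]

theorem IsLatinSquare.isLatinSquare_intercalateSwitch (hL : IsLatinSquare L) {x x' y y' : Q}
    (hdiag : L x y = L x' y') (hanti : L x y' = L x' y) :
    IsLatinSquare (intercalateSwitch L x x' y y') := by
  classical
  refine ⟨fun a => ?_, fun b => ?_⟩
  · by_cases ha : a = x ∨ a = x'
    · have hrow : intercalateSwitch L x x' y y' a = L a ∘ Equiv.swap y y' := by
        funext b
        exact if_pos ha
      exact hrow ▸ (hL.1 a).comp (Equiv.bijective _)
    · have hrow : intercalateSwitch L x x' y y' a = L a := by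
        funext b
        exact if_neg ha
      exact hrow ▸ hL.1 a
  · by_cases hb : b = y ∨ b = y'
    · -- On an intercalate, exchanging the two columns is the same as exchanging the two rows.
      have hcol : (intercalateSwitch L x x' y y' · b) = (L · b) ∘ Equiv.swap x x' := by
        funext a
        grind [intercalateSwitch]
      exact hcol ▸ (hL.2 b).comp (Equiv.bijective _)
    · have hcol : (intercalateSwitch L x x' y y' · b) = (L · b) := by
        funext a
        exact intercalateSwitch_of_not fun h => hb h.2
      exact hcol ▸ hL.2 b

theorem IsLatinSquare.intercalateSwitch_ne (hL : IsLatinSquare L) {x x' y y' : Q} (hy : y ≠ y') :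
    intercalateSwitch L x x' y y' ≠ L := fun h =>
  hy ((hL.1 x).1 (by simpa [intercalateSwitch] using (congrFun₂ h x y).symm))

theorem IsLatinSquare.isCriticalSet_entriesOn {α : Type*} [LT α] [WellFoundedLT α]
    (hL : IsLatinSquare L) (r : Q × Q → α) (hr : ∀ p ∉ K, IsForced L {q | r q < r p} p)
    (hK : ∀ p ∈ K, ∃ x' y', L p.1 p.2 = L x' y' ∧ L p.1 y' = L x' p.2 ∧
      (p.1, y') ∉ K ∧ (x', p.2) ∉ K ∧ (x', y') ∉ K) :
    IsCriticalSet (entriesOn L K) L := by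
  refine isCriticalSet_iff_forall_diff_singleton.2
    ⟨containedIn_entriesOn_iff.2 fun _ _ => rfl, fun L' hL' hC => ?_, ?_⟩
  · exact hL.eq_of_forall_isForced r hr hL' (containedIn_entriesOn_iff.1 hC)
  rintro _ ⟨⟨x, y⟩, hp, rfl⟩
  obtain ⟨x', y', hdiag, hanti, hrow, hcol, hopp⟩ := hK _ hp
  refine ⟨intercalateSwitch L x x' y y', hL.isLatinSquare_intercalateSwitch hdiag hanti, ?_,
    hL.intercalateSwitch_ne fun e => hrow (e ▸ hp)⟩
  rintro _ ⟨⟨⟨a, b⟩, hq, rfl⟩, hne⟩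
  refine intercalateSwitch_of_not ?_
  rintro ⟨rfl | rfl, rfl | rfl⟩
  exacts [hne rfl, hrow hq, hcol hq, hopp hq]

end LatinSquare

theorem isLatinSquare_add {G : Type*} [AddGroup G] : IsLatinSquare fun x y : G => x + y :=
  ⟨AddGroup.addLeft_bijective, AddGroup.addRight_bijective⟩

theorem isForced_add_iff {G : Type*} [AddCommGroup G] {K : Set (G × G)} {p : G × G} :
    IsForced (fun x y => x + y) K p ↔
      (∀ d ≠ 0, p + (0, d) ∈ K ∨ p + (d, 0) ∈ K) ∨
      (∀ d ≠ 0, p + (0, d) ∈ K ∨ p + (-d, d) ∈ K) ∨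
      (∀ d ≠ 0, p + (d, 0) ∈ K ∨ p + (d, -d) ∈ K) := by
  obtain ⟨x, y⟩ := p
  simp only [Prod.mk_add_mk, add_zero]
  refine or_congr ?_ (or_congr ?_ ?_)
  · refine ((Equiv.addLeft (x + y)).forall_congr fun d => ?_).symm
    have hrow (y' : G) : x + y' = x + y + d ↔ y' = y + d := by rw [add_assoc, add_right_inj]
    have hcol (x' : G) : x' + y = x + y + d ↔ x' = x + d := by rw [add_right_comm, add_left_inj]
    simp only [Equiv.coe_addLeft, ne_eq, add_eq_left, hrow, hcol, exists_eq_right]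
  · refine ((Equiv.addLeft y).forall_congr fun d => ?_).symm
    have hsymbol (x' : G) : x' + (y + d) = x + y ↔ x' = x + -d := by
      rw [← eq_sub_iff_add_eq, sub_add_eq_sub_sub, add_sub_cancel_right, sub_eq_add_neg]
    simp only [Equiv.coe_addLeft, ne_eq, add_eq_left, hsymbol, exists_eq_right]
  · refine ((Equiv.addLeft x).forall_congr fun d => ?_).symm
    have hsymbol (y' : G) : x + d + y' = x + y ↔ y' = y + -d := by
      rw [add_assoc, add_right_inj, ← eq_sub_iff_add_eq', sub_eq_add_neg]
    simp only [Equiv.coe_addLeft, ne_eq, add_eq_left, hsymbol, exists_eq_right]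

/-- The filling schedule of the addition table. The entry `0` marks the cells of the critical set,
and an entry `k > 0` says that the cell is forced once all cells with smaller entries are filled.
An element of `(ZMod 2)⁴` is encoded by the number whose binary digits are its coordinates, least
significant digit first. -/
def fillTable : Matrix (Fin 16) (Fin 16) ℕ :=
  !![ 0,  2, 26,  0,  0,  0, 23, 20,  0,  0, 26, 27, 22, 27, 21,  0;
     25,  0, 24, 26, 27, 25,  0,  0,  0,  0, 26,  0, 25,  0, 23,  0;
      0,  0, 14,  0, 25,  0,  0,  0,  0, 26, 13, 25,  0, 15,  0, 14;
     19,  5,  0, 21, 21, 22,  0,  4,  0,  0,  0, 11,  0, 10,  0, 18;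
      0,  6,  0, 20,  0,  0, 20, 19, 21,  0,  0, 12, 12,  0,  1,  0;
     20,  5, 23,  0,  0, 22, 24,  0, 23, 23,  0, 24,  0,  0,  0, 17;
      4,  0, 25,  0, 26,  0, 21,  3,  0, 20, 21, 26,  0,  0,  2,  0;
     18,  1,  0,  0,  0,  0,  0, 17, 16, 11,  0,  0,  0, 16,  0, 17;
     18,  1, 25, 25, 26,  0, 25,  0, 22, 23,  0,  0, 24, 25,  0,  0;
     25,  0,  0,  0, 27, 26, 23,  0, 24,  0, 23,  0,  0, 26, 22,  0;
     19,  0,  0, 22, 24, 21,  0,  0, 21,  0, 20, 23, 24,  0,  0,  0;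
     26,  0, 25,  0,  0, 23, 24,  0,  0, 26,  0,  0, 24,  0, 21,  6;
      0,  6, 19, 20, 18,  0,  0, 19,  0, 19,  0,  0, 19,  0,  0, 18;
      0,  0, 24,  0, 24, 12, 24,  0, 23,  0, 23,  0, 24,  0,  0,  7;
      0,  0,  0, 26, 26, 26,  0,  1, 22, 22,  0, 27,  0,  9,  3,  8;
      0,  0,  0, 26,  0, 27, 25,  0,  0, 25, 27, 26, 25, 27, 22,  0]

/-- The entry of `fillTable` at the cell `p`. -/
def fillRound (p : (Fin 4 → ZMod 2) × (Fin 4 → ZMod 2)) : ℕ :=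
  fillTable (finFunctionFinEquiv p.1) (finFunctionFinEquiv p.2)

theorem ncard_fillRound_eq_zero : {p | fillRound p = 0}.ncard = 121 := by
  rw [Set.ncard_eq_toFinset_card']
  decide +kernel

theorem fillRound_lt_of_ne_zero : ∀ p, fillRound p ≠ 0 →
    (∀ d ≠ 0, fillRound (p + (0, d)) < fillRound p ∨ fillRound (p + (d, 0)) < fillRound p) ∨
    (∀ d ≠ 0, fillRound (p + (0, d)) < fillRound p ∨ fillRound (p + (-d, d)) < fillRound p) ∨
    (∀ d ≠ 0, fillRound (p + (d, 0)) < fillRound p ∨ fillRound (p + (d, -d)) < fillRound p) := by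
  decide +kernel

theorem exists_intercalate_of_fillRound_eq_zero : ∀ p, fillRound p = 0 → ∃ h, h + h = 0 ∧
    fillRound (p + (0, h)) ≠ 0 ∧ fillRound (p + (h, 0)) ≠ 0 ∧ fillRound (p + (h, h)) ≠ 0 := by
  decide +kernel

/-- the Cayley table `L(x,y) = x + y` of the elementary abelian
2-group `(ZMod 2)⁴` of order 16 has a critical set of cardinality 121. -/
theorem criticalSet_card_121_elementary_abelian_two_group :
    ∃ C : Set ((Fin 4 → ZMod 2) × (Fin 4 → ZMod 2) × (Fin 4 → ZMod 2)),
      IsCriticalSet C (fun x y : Fin 4 → ZMod 2 => x + y) ∧ C.ncard = 121 := by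
  refine ⟨entriesOn _ {p | fillRound p = 0}, isLatinSquare_add.isCriticalSet_entriesOn fillRound
    (fun p hp => isForced_add_iff.2 (fillRound_lt_of_ne_zero p hp)) fun p hp => ?_,
    ncard_entriesOn.trans ncard_fillRound_eq_zero⟩
  obtain ⟨h, hh, hrow, hcol, hopp⟩ := exists_intercalate_of_fillRound_eq_zero p hp
  refine ⟨p.1 + h, p.2 + h, ?_, ?_, ?_, ?_, hopp⟩
  · rw [add_add_add_comm, hh, add_zero]
  · abel
  · simpa [Prod.add_def] using hrow
  · simpa [Prod.add_def] using hcol
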